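/- For all integers d with d = 31 or d ≥ 63, and all integers n ≥ 4d + 2^{r_d}, one has q_d^{(1)}(n) ≥ Q_{d−3}^{(1,-)}(n). -/

import Mathlib

/-- `q_d^{(a)}(n)`: the number of partitions of `n` into parts of size at least `a`
such that successive parts differ by at least `d`. -/
noncomputable def gapCount (d a n : ℕ) : ℕ :=
  Nat.card {p : n.Partition //
    (∀ x ∈ p.parts, a ≤ x) ∧
    List.Chain' (fun x y => x + d ≤ y) (p.parts.sort (· ≤ ·))}

/-- `Q_d^{(a)}(n)`: the number of partitions of `n` into parts congruent to `a` or `-a`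
modulo `d + 3`. -/
noncomputable def congCount (d a n : ℕ) : ℕ :=
  Nat.card {p : n.Partition //
    ∀ x ∈ p.parts, x ≡ a [MOD d + 3] ∨ x + a ≡ 0 [MOD d + 3]}

/-- `Q_d^{(a,-)}(n)`: as `congCount`, but no part equals `d + 3 - a`. -/
noncomputable def congMinusCount (d a n : ℕ) : ℕ :=
  Nat.card {p : n.Partition //
    (∀ x ∈ p.parts, x ≡ a [MOD d + 3] ∨ x + a ≡ 0 [MOD d + 3]) ∧
    ∀ x ∈ p.parts, x ≠ d + 3 - a}

/-- `Q_d^{(a,-,-)}(n)`: as `congCount`, but no part equals `a` or `d + 3 - a`. -/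
noncomputable def congMinusMinusCount (d a n : ℕ) : ℕ :=
  Nat.card {p : n.Partition //
    (∀ x ∈ p.parts, x ≡ a [MOD d + 3] ∨ x + a ≡ 0 [MOD d + 3]) ∧
    (∀ x ∈ p.parts, x ≠ a) ∧ ∀ x ∈ p.parts, x ≠ d + 3 - a}

/-- `ρ(R; n)`: the number of partitions of `n` all of whose parts lie in `R`. -/
noncomputable def rhoCount (R : Set ℕ) (n : ℕ) : ℕ :=
  Nat.card {p : n.Partition // ∀ x ∈ p.parts, x ∈ R}

/-- `h_n^{(a)}`: the least nonnegative residue of `-n` modulo `a`,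
so that `n + negRes n a = a * ⌈n/a⌉`. -/
def negRes (n a : ℕ) : ℕ := (a - n % a) % a

/-- `⌈d/a⌉` for natural numbers. -/
def cdiv (d a : ℕ) : ℕ := (d + a - 1) / a

/-!
Write `D = d - 1` and `N = ⌊n / D⌋`. A partition of `n` into parts congruent to `± 1` modulo `d` is
determined by its parts other than `1`. Those have the form `d * j ± 1 ≥ D * j` with `j ≥ 1`, so
replacing each by `j`, coloured by the sign, shows that the number of such partitions is at most the
number of two-coloured partitions of integers `≤ N`. Evaluating the generating function near its
saddle point `x = t / (t + 1)`, `t ≈ √N / 2`, bounds the latter by `exp (c √N)`.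

Conversely, adding the staircase `1, 1 + d, 1 + 2 d, …` to a weakly increasing sequence of `m + 1`
nonnegative integers with sum `M` produces a partition with gaps at least `d`. Sorting is at most
`(m + 1)!`-to-one and there are at least `(M + 1) ^ m / m!` sequences with sum `M`, so `n` has at
least `(M + 1) ^ m / (m! (m + 1)!)` such partitions. With `m = ⌊√N⌋` this is superexponential in
`√N`, and for `d ≥ 31` it beats the upper bound for every `N ≥ 4`; the finitely many cases with
`m < 13` are checked by rational arithmetic.
-/

open Finset
open scoped Nat

/-! ### Partitions with gaps -/

theorem card_piAntidiag_univ {ι : Type*} [Fintype ι] [DecidableEq ι] (M : ℕ) :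
    #(piAntidiag (univ : Finset ι) M) = (Fintype.card ι).multichoose M := by
  rw [← map_sym_eq_piAntidiag, card_map, sym_univ, card_univ, Sym.card_sym_eq_multichoose]

theorem card_piAntidiag_le_factorial_mul_card_monotone (k M : ℕ) :
    #(piAntidiag (univ : Finset (Fin k)) M) ≤
      k ! * #{f ∈ piAntidiag (univ : Finset (Fin k)) M | Monotone f} := by
  have hsub : piAntidiag (univ : Finset (Fin k)) M ⊆
      image₂ (fun (σ : Equiv.Perm (Fin k)) f => f ∘ σ) univ
        {f ∈ piAntidiag (univ : Finset (Fin k)) M | Monotone f} := by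
    intro f hf
    rw [mem_image₂]
    refine ⟨(Tuple.sort f)⁻¹, mem_univ _, f ∘ Tuple.sort f,
      mem_filter.2 ⟨?_, Tuple.monotone_sort f⟩, by ext; simp⟩
    simpa [Equiv.sum_comp (Tuple.sort f) f] using hf
  calc _ ≤ _ := card_le_card hsub
    _ ≤ _ := card_image₂_le _ _ _
    _ = _ := by rw [card_univ, Fintype.card_perm, Fintype.card_fin]

/-- Adding a staircase to a sequence: entry `i`, counted from `0`, is increased by `a + d * i`.
This turns a weakly increasing sequence into the parts, in increasing order, of a partition counted
by `gapCount d a`. -/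
def addStaircase (a d : ℕ) {k : ℕ} (f : Fin k → ℕ) (i : Fin k) : ℕ :=
  f i + a + d * i

section AddStaircase

variable {k : ℕ} {f : Fin k → ℕ}

theorem le_addStaircase (f : Fin k → ℕ) (a d : ℕ) (i : Fin k) : a ≤ addStaircase a d f i := by
  rw [addStaircase]
  omega

theorem sum_addStaircase (f : Fin k → ℕ) (a d : ℕ) :
    ∑ i, addStaircase a d f i = ∑ i, f i + k * a + d * k.choose 2 := by
  simp only [addStaircase]
  rw [sum_add_distrib, sum_add_distrib, ← mul_sum, Fin.sum_univ_eq_sum_range (fun i => i),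
    sum_range_id, ← Nat.choose_two_right]
  simp

theorem addStaircase_mono (hf : Monotone f) (a d : ℕ) : Monotone (addStaircase a d f) :=
  fun i j hij => by
    have := hf hij
    simp only [addStaircase]
    gcongr
    exact hij

theorem addStaircase_injective (a d : ℕ) :
    Function.Injective (addStaircase a d : (Fin k → ℕ) → Fin k → ℕ) :=
  fun f g h => funext fun i => by simpa [addStaircase] using congrFun h i

theorem isChain_ofFn_addStaircase (hf : Monotone f) (a d : ℕ) :
    (List.ofFn (addStaircase a d f)).IsChain fun x y => x + d ≤ y := by
  rw [List.isChain_ofFn]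
  intro i hi
  have : f ⟨i, by omega⟩ ≤ f ⟨i + 1, hi⟩ := hf (Fin.mk_le_mk.2 i.le_succ)
  simp only [addStaircase]
  linarith

end AddStaircase

theorem sort_ofFn_of_monotone {α : Type*} [LinearOrder α] {k : ℕ} {f : Fin k → α}
    (hf : Monotone f) : (List.ofFn f : Multiset α).sort (· ≤ ·) = List.ofFn f := by
  rw [Multiset.coe_sort]
  exact List.mergeSort_eq_self _ (List.sortedLE_ofFn_iff.2 hf).pairwise

theorem card_monotone_le_gapCount {a : ℕ} (ha : 0 < a) (d k M : ℕ) :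
    #{f ∈ piAntidiag (univ : Finset (Fin k)) M | Monotone f} ≤
      gapCount d a (M + k * a + d * k.choose 2) := by
  set S := {f ∈ piAntidiag (univ : Finset (Fin k)) M | Monotone f}
  have hS {f} (hf : f ∈ S) : ∑ i, f i = M ∧ Monotone f :=
    (mem_filter.1 hf).imp_left fun h => (mem_piAntidiag.1 h).1
  have hsort {f} (hf : f ∈ S) := sort_ofFn_of_monotone (addStaircase_mono (hS hf).2 a d)
  have hle {f : Fin k → ℕ} (x : ℕ) (hx : x ∈ (List.ofFn (addStaircase a d f) : Multiset ℕ)) :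
      a ≤ x := by
    obtain ⟨i, rfl⟩ := List.mem_ofFn.1 (Multiset.mem_coe.1 hx)
    exact le_addStaircase f a d i
  rw [gapCount, ← Nat.card_eq_finsetCard]
  refine Nat.card_le_card_of_injective
    (fun f => ⟨⟨List.ofFn (addStaircase a d f.1), fun hx => ha.trans_le (hle _ hx), ?_⟩, hle, ?_⟩)
    fun f g hfg => ?_
  · rw [Multiset.sum_coe, List.sum_ofFn, sum_addStaircase, (hS f.2).1]
  · change List.IsChain _ (Multiset.sort _ _)
    rw [hsort f.2]
    exact isChain_ofFn_addStaircase (hS f.2).2 a d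
  · have hparts : (List.ofFn (addStaircase a d f.1) : Multiset ℕ) =
        List.ofFn (addStaircase a d g.1) :=
      congrArg (fun p => p.1.parts) hfg
    have hlist := congrArg (Multiset.sort · (· ≤ ·)) hparts
    simp only [hsort f.2, hsort g.2] at hlist
    exact Subtype.ext (addStaircase_injective a d (List.ofFn_injective hlist))

theorem multichoose_le_factorial_mul_gapCount {a : ℕ} (ha : 0 < a) (d k M : ℕ) :
    k.multichoose M ≤ k ! * gapCount d a (M + k * a + d * k.choose 2) := by
  rw [← Fintype.card_fin k, ← card_piAntidiag_univ, Fintype.card_fin]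
  exact (card_piAntidiag_le_factorial_mul_card_monotone k M).trans
    (Nat.mul_le_mul_left _ (card_monotone_le_gapCount ha d k M))

theorem add_one_pow_le_factorial_mul_multichoose (m M : ℕ) :
    (M + 1) ^ m ≤ m ! * (m + 1).multichoose M := by
  have hchoose : (m + 1).multichoose M = (M + m).choose m := by
    rw [Nat.multichoose_eq, show m + 1 + M - 1 = M + m by omega, Nat.choose_symm_add]
  rw [hchoose, ← Nat.ascFactorial_eq_factorial_mul_choose]
  exact Nat.pow_succ_le_ascFactorial (M + 1) m

theorem add_one_pow_le_mul_gapCount {a : ℕ} (ha : 0 < a) (d m M : ℕ) :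
    (M + 1) ^ m ≤
      (m + 1)! * m ! * gapCount d a (M + (m + 1) * a + d * (m + 1).choose 2) :=
  calc (M + 1) ^ m ≤ m ! * (m + 1).multichoose M := add_one_pow_le_factorial_mul_multichoose m M
    _ ≤ m ! * ((m + 1)! * gapCount d a (M + (m + 1) * a + d * (m + 1).choose 2)) := by
        gcongr
        exact multichoose_le_factorial_mul_gapCount ha d (m + 1) M
    _ = _ := by ring

/-! ### Two-coloured partitions -/

/-- If `f N` counts the partitions of `N` into parts from some family, then `addPart j f N` counts
the partitions of `N` once a further kind of part, of size `0 < j`, is allowed: `i` copies of the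
new part leave `N - i * j`. -/
def addPart (j : ℕ) (f : ℕ → ℕ) (N : ℕ) : ℕ :=
  ∑ i ∈ range (N / j + 1), f (N - i * j)

section AddPart

variable {j : ℕ} {f : ℕ → ℕ}

theorem addPart_of_lt {N : ℕ} (f : ℕ → ℕ) (h : N < j) : addPart j f N = f N := by
  simp [addPart, Nat.div_eq_of_lt h]

theorem addPart_of_le {N : ℕ} (f : ℕ → ℕ) (hj : 0 < j) (h : j ≤ N) :
    addPart j f N = f N + addPart j f (N - j) := by
  rw [addPart, Nat.div_eq_sub_div hj h, sum_range_succ', addPart, add_comm]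
  simp [add_one_mul, Nat.sub_sub, add_comm j]

theorem le_addPart (j : ℕ) (f : ℕ → ℕ) (N : ℕ) : f N ≤ addPart j f N := by
  simp [addPart, sum_range_succ']

theorem addPart_mono (hf : Monotone f) (j : ℕ) : Monotone (addPart j f) := fun a b hab =>
  calc ∑ i ∈ range (a / j + 1), f (a - i * j)
      ≤ ∑ i ∈ range (a / j + 1), f (b - i * j) :=
        sum_le_sum fun i _ => hf (Nat.sub_le_sub_right hab _)
    _ ≤ ∑ i ∈ range (b / j + 1), f (b - i * j) :=
        sum_le_sum_of_subset (range_subset_range.2 (by gcongr))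

theorem addPart_mul_pow_le {K : Type*} [Field K] [LinearOrder K] [IsStrictOrderedRing K]
    {x C : K} (hj : 0 < j) (hx0 : 0 ≤ x) (hx1 : x < 1) (hf : ∀ N, f N * x ^ N ≤ C) (N : ℕ) :
    addPart j f N * x ^ N ≤ C * (1 - x ^ j)⁻¹ := by
  have hxj : 0 < 1 - x ^ j := sub_pos.2 (pow_lt_one₀ hx0 hx1 hj.ne')
  rw [← div_eq_mul_inv, le_div_iff₀ hxj]
  induction N using Nat.strong_induction_on with
  | _ N ih =>
    rcases lt_or_ge N j with h | h
    · rw [addPart_of_lt f h]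
      refine (mul_le_of_le_one_right (by positivity) ?_).trans (hf N)
      linarith [pow_nonneg hx0 j]
    · have hpow : x ^ N = x ^ (N - j) * x ^ j := by rw [← pow_add, Nat.sub_add_cancel h]
      rw [addPart_of_le f hj h]
      push_cast
      calc ((f N : K) + addPart j f (N - j)) * x ^ N * (1 - x ^ j)
          = f N * x ^ N * (1 - x ^ j)
            + addPart j f (N - j) * x ^ (N - j) * (1 - x ^ j) * x ^ j := by rw [hpow]; ring
        _ ≤ C * (1 - x ^ j) + C * x ^ j := by
            gcongr
            · exact hf N
            · exact ih (N - j) (by omega)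
        _ = C := by ring

end AddPart

/-- The number of two-coloured partitions of an integer `≤ N` into parts of size at most `J`, where
the two colours of a part count as distinct. The constant `1` at `J = 0` accounts for `≤ N` rather
than `= N`. -/
def twoColorCount : ℕ → ℕ → ℕ
  | 0 => fun _ => 1
  | J + 1 => addPart (J + 1) (addPart (J + 1) (twoColorCount J))

theorem twoColorCount_mono (J : ℕ) : Monotone (twoColorCount J) := by
  induction J with
  | zero => exact monotone_const
  | succ J ih => exact addPart_mono (addPart_mono ih _) _

theorem twoColorCount_mul_pow_le {K : Type*} [Field K] [LinearOrder K] [IsStrictOrderedRing K]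
    {x : K} (hx0 : 0 ≤ x) (hx1 : x < 1) (J N : ℕ) :
    twoColorCount J N * x ^ N ≤ (∏ j ∈ range J, (1 - x ^ (j + 1))⁻¹) ^ 2 := by
  induction J generalizing N with
  | zero => simpa [twoColorCount] using pow_le_one₀ hx0 hx1.le
  | succ J ih =>
    rw [prod_range_succ, mul_pow, sq (1 - x ^ (J + 1))⁻¹, ← mul_assoc]
    exact addPart_mul_pow_le J.succ_pos hx0 hx1 (addPart_mul_pow_le J.succ_pos hx0 hx1 ih) N

/-! ### Partitions into congruent parts -/

/-- The partitions of integers `≤ n` with all parts in `S`, as multisets. -/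
def multisetsLE (S : Set ℕ) (n : ℕ) : Set (Multiset ℕ) :=
  {m | (∀ x ∈ m, x ∈ S) ∧ m.sum ≤ n}

theorem multisetsLE_mono {S T : Set ℕ} (h : S ⊆ T) (n : ℕ) : multisetsLE S n ⊆ multisetsLE T n :=
  fun _ hm => ⟨fun x hx => h (hm.1 x hx), hm.2⟩

theorem multisetsLE_insert_of_lt {p n : ℕ} (S : Set ℕ) (h : n < p) :
    multisetsLE (insert p S) n = multisetsLE S n := by
  refine (multisetsLE_mono (Set.subset_insert p S) n).antisymm' fun m ⟨hm, hs⟩ =>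
    ⟨fun x hx => ?_, hs⟩
  refine (hm x hx).resolve_left fun hxp => ?_
  exact (hxp ▸ h).not_ge ((Multiset.le_sum_of_mem hx).trans hs)

theorem multisetsLE_insert_subset (p n : ℕ) (S : Set ℕ) :
    multisetsLE (insert p S) n ⊆
      multisetsLE S n ∪ (p ::ₘ ·) '' multisetsLE (insert p S) (n - p) := by
  rintro m ⟨hm, hs⟩
  by_cases hpm : p ∈ m
  · obtain ⟨m, rfl⟩ := Multiset.exists_cons_of_mem hpm
    rw [Multiset.sum_cons] at hs
    exact .inr ⟨m, ⟨fun x hx => hm x (Multiset.mem_cons_of_mem hx), by omega⟩, rfl⟩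
  · exact .inl ⟨fun x hx => (hm x hx).resolve_left fun hxp => hpm (hxp ▸ hx), hs⟩

-- One copy of `p` uses at least `j` of the `n / D` available units.
theorem encard_multisetsLE_insert_le {D j p : ℕ} {S : Set ℕ} {f : ℕ → ℕ} (hD : 0 < D) (hj : 0 < j)
    (hp : D * j ≤ p) (hf : Monotone f) (h : ∀ n, (multisetsLE S n).encard ≤ f (n / D)) (n : ℕ) :
    (multisetsLE (insert p S) n).encard ≤ addPart j f (n / D) := by
  induction n using Nat.strong_induction_on with
  | _ n ih =>
    rcases lt_or_ge n p with hnp | hpn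
    · rw [multisetsLE_insert_of_lt S hnp]
      exact (h n).trans (mod_cast le_addPart j f (n / D))
    · have hp0 : 0 < p := (Nat.mul_pos hD hj).trans_le hp
      have hjn : j ≤ n / D := by
        rw [Nat.le_div_iff_mul_le hD, mul_comm]
        exact hp.trans hpn
      have hsub : (n - p) / D ≤ n / D - j := by
        rw [← Nat.sub_mul_div]
        gcongr
      calc (multisetsLE (insert p S) n).encard
          ≤ (multisetsLE S n).encard + (multisetsLE (insert p S) (n - p)).encard :=
            (Set.encard_le_encard (multisetsLE_insert_subset p n S)).trans <|
              (Set.encard_union_le _ _).trans (add_le_add_right (Set.encard_image_le _ _) _)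
        _ ≤ f (n / D) + addPart j f ((n - p) / D) := add_le_add (h n) (ih (n - p) (by omega))
        _ ≤ f (n / D) + addPart j f (n / D - j) := by gcongr; exact mod_cast addPart_mono hf j hsub
        _ = addPart j f (n / D) := by rw [addPart_of_le f hj hjn]; norm_cast

/-- The parts congruent to `± a` modulo `D`, sorted into the pairs `D * j + a`, `D * j - a` with
`1 ≤ j ≤ J`. The part `a` itself is left out. -/
def congParts (D a J : ℕ) : Set ℕ :=
  {x | ∃ j, 0 < j ∧ j ≤ J ∧ (x = D * j + a ∨ x + a = D * j)}

theorem congParts_zero (D a : ℕ) : congParts D a 0 = ∅ := by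
  ext x
  simp only [congParts, Set.mem_ofPred_eq, Set.mem_empty_iff_false, iff_false]
  rintro ⟨j, hj, hj0, -⟩
  omega

theorem congParts_succ_subset (D a J : ℕ) :
    congParts D a (J + 1) ⊆
      insert (D * (J + 1) + a) (insert (D * (J + 1) - a) (congParts D a J)) := by
  rintro x ⟨j, hj0, hj, h⟩
  rcases hj.lt_or_eq with hlt | rfl
  · exact .inr (.inr ⟨j, hj0, by omega, h⟩)
  · exact h.imp id fun h => .inl (by omega)

theorem sub_mul_add_le_mul {a D j : ℕ} (ha : a ≤ D) (hj : 0 < j) : (D - a) * j + a ≤ D * j :=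
  calc (D - a) * j + a ≤ (D - a) * j + a * j := by gcongr; exact Nat.le_mul_of_pos_right a hj
    _ = D * j := by rw [← add_mul, Nat.sub_add_cancel ha]

theorem encard_multisetsLE_congParts_le {D a : ℕ} (ha : a < D) (J n : ℕ) :
    (multisetsLE (congParts D a J) n).encard ≤ twoColorCount J (n / (D - a)) := by
  have hD : 0 < D - a := Nat.sub_pos_of_lt ha
  induction J generalizing n with
  | zero =>
    rw [congParts_zero, twoColorCount, Nat.cast_one, Set.encard_le_one_iff]
    have hzero {m} (hm : m ∈ multisetsLE ∅ n) : m = 0 :=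
      Multiset.eq_zero_of_forall_notMem hm.1
    exact fun m m' hm hm' => (hzero hm).trans (hzero hm').symm
  | succ J ih =>
    have hJ : (D - a) * (J + 1) + a ≤ D * (J + 1) := sub_mul_add_le_mul ha.le J.succ_pos
    refine (Set.encard_le_encard (multisetsLE_mono (congParts_succ_subset D a J) n)).trans ?_
    refine encard_multisetsLE_insert_le (j := J + 1) hD J.succ_pos (by omega)
      (addPart_mono (twoColorCount_mono J) _) ?_ n
    exact encard_multisetsLE_insert_le (j := J + 1) hD J.succ_pos (by omega)
      (twoColorCount_mono J) ih

theorem partition_eq_of_filter_ne_eq {a n : ℕ} (ha : a ≠ 0) {p q : n.Partition}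
    (h : p.parts.filter (· ≠ a) = q.parts.filter (· ≠ a)) : p = q := by
  have hsplit (r : n.Partition) :
      Multiset.replicate (r.parts.count a) a + r.parts.filter (· ≠ a) = r.parts := by
    rw [← Multiset.filter_eq', Multiset.filter_add_not]
  have hsum (r : n.Partition) :
      r.parts.count a * a + (r.parts.filter (· ≠ a)).sum = n := by
    simpa [r.parts_sum] using congrArg Multiset.sum (hsplit r)
  have hcount : p.parts.count a = q.parts.count a := by
    have := (hsum p).trans (hsum q).symm
    rw [h] at this
    exact Nat.eq_of_mul_eq_mul_right (Nat.pos_of_ne_zero ha) (Nat.add_right_cancel this)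
  ext1
  rw [← hsplit p, ← hsplit q, h, hcount]

theorem mem_congParts_of_modEq {D a x n : ℕ} (ha0 : 0 < a) (ha : a < D) (hxa : x ≠ a) (hxn : x ≤ n)
    (h : x ≡ a [MOD D] ∨ x + a ≡ 0 [MOD D]) : x ∈ congParts D a (n / (D - a)) := by
  obtain ⟨j, hj0, hj⟩ : ∃ j, 0 < j ∧ (x = D * j + a ∨ x + a = D * j) := by
    rcases h with h | h
    · have hmod : D * (x / D) + a = x := by
        rw [← Nat.mod_eq_of_lt ha, ← h, Nat.div_add_mod]
      refine ⟨x / D, Nat.pos_of_ne_zero fun h0 => hxa ?_, .inl hmod.symm⟩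
      simpa [h0] using hmod.symm
    · obtain ⟨j, hj⟩ := Nat.modEq_zero_iff_dvd.1 h
      exact ⟨j, Nat.pos_of_ne_zero fun h0 => by simp [h0] at hj; omega, .inr hj⟩
  refine ⟨j, hj0, (Nat.le_div_iff_mul_le (Nat.sub_pos_of_lt ha)).2 ?_, hj⟩
  rw [mul_comm]
  have := sub_mul_add_le_mul ha.le hj0
  omega

theorem congCount_le_twoColorCount {d a : ℕ} (n : ℕ) (ha0 : 0 < a) (ha : a < d + 3) :
    congCount d a n ≤ twoColorCount (n / (d + 3 - a)) (n / (d + 3 - a)) := by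
  set S := {p : n.Partition | ∀ x ∈ p.parts, x ≡ a [MOD d + 3] ∨ x + a ≡ 0 [MOD d + 3]}
  have hmaps : Set.MapsTo (fun p : n.Partition => p.parts.filter (· ≠ a)) S
      (multisetsLE (congParts (d + 3) a (n / (d + 3 - a))) n) := by
    refine fun p hp => ⟨fun x hx => ?_, ?_⟩
    · obtain ⟨hxp, hxa⟩ := Multiset.mem_filter.1 hx
      exact mem_congParts_of_modEq ha0 ha hxa (Nat.Partition.le_of_mem_parts hxp) (hp x hxp)
    · have hsum := congrArg Multiset.sum (Multiset.filter_add_not (· ≠ a) p.parts)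
      rw [Multiset.sum_add, p.parts_sum] at hsum
      exact Nat.le.intro hsum
  have hinj : Set.InjOn (fun p : n.Partition => p.parts.filter (· ≠ a)) S :=
    fun _ _ _ _ h => partition_eq_of_filter_ne_eq ha0.ne' h
  have hle : (S.ncard : ℕ∞) ≤ twoColorCount (n / (d + 3 - a)) (n / (d + 3 - a)) := by
    rw [Set.Finite.cast_ncard_eq S.toFinite]
    exact (Set.encard_le_encard_of_injOn hmaps hinj).trans (encard_multisetsLE_congParts_le ha _ n)
  exact_mod_cast hle

/-! ### The saddle point bound -/

section OrderedField

variable {K : Type*} [Field K] [LinearOrder K] [IsStrictOrderedRing K]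

theorem pow_div_one_sub_pow_le {x : K} (hx0 : 0 ≤ x) (hx1 : x < 1) (m : ℕ) :
    x ^ (m + 1) / (1 - x ^ (m + 1)) ≤ x / (1 - x) / (m + 1) := by
  have : 0 < 1 - x := sub_pos.2 hx1
  have hxm : 0 < 1 - x ^ (m + 1) := sub_pos.2 (pow_lt_one₀ hx0 hx1 m.succ_ne_zero)
  have hgeom : ((m : K) + 1) * x ^ m ≤ ∑ i ∈ range (m + 1), x ^ i := by
    have := card_nsmul_le_sum (range (m + 1)) (x ^ ·) (x ^ m) fun i hi =>
      pow_le_pow_of_le_one hx0 hx1.le (mem_range_succ_iff.1 hi)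
    simpa using this
  rw [div_div, div_le_div_iff₀ hxm (by positivity)]
  calc x ^ (m + 1) * ((1 - x) * (m + 1)) = x * (1 - x) * ((m + 1) * x ^ m) := by ring
    _ ≤ x * (1 - x) * ∑ i ∈ range (m + 1), x ^ i := by gcongr
    _ = x * (1 - x ^ (m + 1)) := by rw [← geom_sum_mul_neg]; ring

theorem sum_pow_succ_le {y : K} (hy0 : 0 ≤ y) (hy1 : y < 1) (J : ℕ) :
    ∑ j ∈ range J, y ^ (j + 1) ≤ y / (1 - y) := by
  rw [le_div_iff₀ (sub_pos.2 hy1)]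
  calc (∑ j ∈ range J, y ^ (j + 1)) * (1 - y) = y * (1 - y ^ J) := by
        simp only [pow_succ']
        rw [← mul_sum, mul_assoc, geom_sum_mul_neg]
    _ ≤ y := mul_le_of_le_one_right hy0 (sub_le_self 1 (pow_nonneg hy0 J))

end OrderedField

-- Expand the logarithms and sum over `j` first: the coefficient of `1 / m` is at most
-- `x ^ m / (1 - x ^ m) ≤ x / (1 - x) / m`, which leaves `∑ 1 / m ^ 2`.
theorem sum_log_inv_one_sub_pow_le {x : ℝ} (hx0 : 0 ≤ x) (hx1 : x < 1) (J : ℕ) :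
    ∑ j ∈ range J, Real.log (1 - x ^ (j + 1))⁻¹ ≤ x / (1 - x) * (Real.pi ^ 2 / 6) := by
  have hlt (j : ℕ) : x ^ (j + 1) < 1 := pow_lt_one₀ hx0 hx1 j.succ_ne_zero
  have hlog : HasSum (fun m : ℕ => ∑ j ∈ range J, (x ^ (j + 1)) ^ (m + 1) / ((m : ℝ) + 1))
      (∑ j ∈ range J, Real.log (1 - x ^ (j + 1))⁻¹) := by
    refine hasSum_sum fun j _ => ?_
    rw [Real.log_inv]
    exact Real.hasSum_pow_div_log_of_abs_lt_one (by rw [abs_of_nonneg (by positivity)]; exact hlt j)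
  have hzeta : HasSum (fun m : ℕ => 1 / ((m : ℝ) + 1) ^ 2) (Real.pi ^ 2 / 6) := by
    simpa using (hasSum_nat_add_iff' 1).2 hasSum_zeta_two
  refine hasSum_le (fun m => ?_) hlog (hzeta.mul_left (x / (1 - x)))
  calc ∑ j ∈ range J, (x ^ (j + 1)) ^ (m + 1) / ((m : ℝ) + 1)
      = (∑ j ∈ range J, (x ^ (m + 1)) ^ (j + 1)) / ((m : ℝ) + 1) := by
        rw [sum_div]
        exact sum_congr rfl fun j _ => by rw [pow_right_comm]
    _ ≤ x / (1 - x) / (m + 1) / ((m : ℝ) + 1) := by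
        gcongr
        exact (sum_pow_succ_le (by positivity) (hlt m) J).trans (pow_div_one_sub_pow_le hx0 hx1 m)
    _ = x / (1 - x) * (1 / ((m : ℝ) + 1) ^ 2) := by field_simp

theorem prod_inv_one_sub_pow_le_exp {x : ℝ} (hx0 : 0 ≤ x) (hx1 : x < 1) (J : ℕ) :
    ∏ j ∈ range J, (1 - x ^ (j + 1))⁻¹ ≤ Real.exp (x / (1 - x) * (Real.pi ^ 2 / 6)) := by
  have hpos (j : ℕ) : 0 < (1 - x ^ (j + 1))⁻¹ :=
    inv_pos.2 (sub_pos.2 (pow_lt_one₀ hx0 hx1 j.succ_ne_zero))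
  rw [← Real.log_le_iff_le_exp (prod_pos fun j _ => hpos j), Real.log_prod fun j _ => (hpos j).ne']
  exact sum_log_inv_one_sub_pow_le hx0 hx1 J

theorem twoColorCount_le_exp {t : ℝ} (ht : 0 < t) (J N : ℕ) :
    twoColorCount J N ≤ Real.exp (Real.pi ^ 2 / 3 * t + N / t) := by
  set x := t / (t + 1) with hx
  have hx0 : 0 < x := by positivity
  have hx1 : x < 1 := (div_lt_one (by positivity)).2 (lt_add_one t)
  have hodds : x / (1 - x) = t := by rw [hx]; field_simp; ring
  have hprod : twoColorCount J N * x ^ N ≤ Real.exp (Real.pi ^ 2 / 3 * t) :=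
    calc twoColorCount J N * x ^ N ≤ (∏ j ∈ range J, (1 - x ^ (j + 1))⁻¹) ^ 2 :=
          twoColorCount_mul_pow_le hx0.le hx1 J N
      _ ≤ Real.exp (x / (1 - x) * (Real.pi ^ 2 / 6)) ^ 2 := by
          gcongr
          · exact prod_nonneg fun j _ => inv_nonneg.2 (sub_nonneg.2 (pow_le_one₀ hx0.le hx1.le))
          · exact prod_inv_one_sub_pow_le_exp hx0.le hx1 J
      _ = Real.exp (Real.pi ^ 2 / 3 * t) := by
          rw [hodds, ← Real.exp_nat_mul]
          congr 1
          push_cast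
          ring
  have hinv : x⁻¹ ≤ Real.exp (1 / t) :=
    calc x⁻¹ = 1 / t + 1 := by rw [hx]; field_simp; ring
      _ ≤ Real.exp (1 / t) := Real.add_one_le_exp _
  calc (twoColorCount J N : ℝ) = twoColorCount J N * x ^ N * x⁻¹ ^ N := by
        rw [mul_assoc, ← mul_pow, mul_inv_cancel₀ hx0.ne', one_pow, mul_one]
    _ ≤ Real.exp (Real.pi ^ 2 / 3 * t) * Real.exp (1 / t) ^ N := by gcongr
    _ = Real.exp (Real.pi ^ 2 / 3 * t + N / t) := by
        rw [← Real.exp_nat_mul, ← Real.exp_add, mul_one_div]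

theorem exp_eleven_thirds_le : Real.exp (11 / 3) ≤ 40 := by
  refine le_of_pow_le_pow_left₀ three_ne_zero (by norm_num) ?_
  calc Real.exp (11 / 3) ^ 3 = Real.exp 1 ^ 11 := by
        rw [← Real.exp_nat_mul, ← Real.exp_nat_mul]
        norm_num
    _ ≤ 2.7182818286 ^ 11 := by gcongr; exact Real.exp_one_lt_d9.le
    _ ≤ 40 ^ 3 := by norm_num

theorem twoColorCount_le_forty_pow {k N : ℕ} (J : ℕ) (hN : N ≤ (k + 1) ^ 2) :
    twoColorCount J N ≤ 40 ^ (k + 1) := by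
  have hk : (0 : ℝ) < k + 1 := by positivity
  have hN' : (N : ℝ) ≤ (k + 1) ^ 2 := mod_cast hN
  have hpi : Real.pi ^ 2 ≤ 10 := by nlinarith [Real.pi_lt_d2, Real.pi_pos]
  -- The bound at `t = (k + 1) / 2` has exponent at most `(π ^ 2 / 6 + 2) * (k + 1)`.
  have hexponent : Real.pi ^ 2 / 3 * ((k + 1) / 2) + N / ((k + 1) / 2) ≤
      (k + 1 : ℕ) * (11 / 3 : ℝ) :=
    calc Real.pi ^ 2 / 3 * ((k + 1) / 2) + N / ((k + 1) / 2 : ℝ)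
        ≤ 10 / 3 * ((k + 1) / 2) + (k + 1) ^ 2 / ((k + 1) / 2) := by gcongr
      _ = (k + 1 : ℕ) * (11 / 3 : ℝ) := by push_cast; field_simp; ring
  have : (twoColorCount J N : ℝ) ≤ 40 ^ (k + 1) :=
    calc (twoColorCount J N : ℝ)
        ≤ Real.exp (Real.pi ^ 2 / 3 * ((k + 1) / 2) + N / ((k + 1) / 2)) :=
          twoColorCount_le_exp (half_pos hk) J N
      _ ≤ Real.exp (11 / 3) ^ (k + 1) := by rw [← Real.exp_nat_mul]; gcongr
      _ ≤ 40 ^ (k + 1) := by gcongr; exact exp_eleven_thirds_le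
  exact_mod_cast this

/-! ### Comparison of the bounds -/

theorem two_mul_pow_self_le (k : ℕ) (hk : k ≠ 0) : 2 * k ^ k ≤ (k + 1) ^ k :=
  calc 2 * k ^ k = k ^ k + k * k ^ (k - 1) * 1 := by
        rw [mul_one, mul_pow_sub_one hk, two_mul]
    _ ≤ (k + 1) ^ k := pow_add_mul_le_add_pow k.zero_le (Nat.zero_le _) k

theorem factorial_mul_factorial_mul_pow_le {k : ℕ} (hk : 13 ≤ k) :
    (k + 1)! * k ! * 40 ^ (k + 1) ≤ (13 * k ^ 2) ^ k := by
  induction k, hk using Nat.le_induction with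
  | base => decide +kernel
  | succ k hk ih =>
    calc (k + 1 + 1)! * (k + 1)! * 40 ^ (k + 1 + 1)
        = (k + 1)! * k ! * 40 ^ (k + 1) * ((k + 1) * (40 * (k + 2))) := by
          rw [Nat.factorial_succ (k + 1), Nat.factorial_succ k]
          ring
      _ ≤ (13 * k ^ 2) ^ k * ((k + 1) * (52 * (k + 1))) := by
          have : 40 * (k + 2) ≤ 52 * (k + 1) := by omega
          gcongr
      _ = 13 ^ (k + 1) * (k + 1) ^ 2 * (2 * k ^ k) ^ 2 := by ring
      _ ≤ 13 ^ (k + 1) * (k + 1) ^ 2 * ((k + 1) ^ k) ^ 2 := by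
          gcongr
          exact two_mul_pow_self_le k (by omega)
      _ = (13 * (k + 1) ^ 2) ^ (k + 1) := by
          rw [mul_assoc, ← mul_pow, ← pow_succ', mul_pow 13, pow_right_comm]

theorem two_mul_choose_succ_two (k : ℕ) : 2 * (k + 1).choose 2 = k * (k + 1) := by
  rw [Nat.choose_two_right, mul_comm, Nat.div_two_mul_two_of_even (Nat.even_mul_pred_self _)]
  simp [mul_comm]

theorem choose_sqrt_succ_two_le (N : ℕ) : (N.sqrt + 1).choose 2 ≤ N := by
  have := two_mul_choose_succ_two N.sqrt
  nlinarith [N.sqrt_le']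

theorem factorial_mul_twoColorCount_le_of_lt : ∀ N < 11, 4 ≤ N →
    (N.sqrt + 1)! * N.sqrt ! * twoColorCount N N ≤
      (30 * N - 31 * (N.sqrt + 1).choose 2 - N.sqrt) ^ N.sqrt := by
  decide +kernel

-- `s / (s + 1)` with `s = ⌊(k + 1) / 2⌋` is a rational point near the saddle.
theorem factorial_mul_prod_le : ∀ k < 13, ∀ N < (k + 1) ^ 2, k ^ 2 ≤ N → 11 ≤ N →
    ((k + 1)! * k ! : ℚ) * (∏ j ∈ range N,
      (1 - (((k + 1) / 2 : ℕ) / ((k + 1) / 2 + 1 : ℕ) : ℚ) ^ (j + 1))⁻¹) ^ 2 ≤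
      (30 * N - 31 * (k + 1).choose 2 - k : ℕ) ^ k *
        (((k + 1) / 2 : ℕ) / ((k + 1) / 2 + 1 : ℕ) : ℚ) ^ N := by
  decide +kernel

theorem factorial_mul_twoColorCount_le_of_sqrt_lt {N : ℕ} (hN : 11 ≤ N) (hk : N.sqrt < 13) :
    (N.sqrt + 1)! * N.sqrt ! * twoColorCount N N ≤
      (30 * N - 31 * (N.sqrt + 1).choose 2 - N.sqrt) ^ N.sqrt := by
  set s := (N.sqrt + 1) / 2
  have hs : 0 < s := Nat.div_pos (Nat.succ_le_succ (Nat.sqrt_pos.2 (by omega))) two_pos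
  set x : ℚ := (s : ℕ) / (s + 1 : ℕ)
  have hx0 : 0 < x := by positivity
  have hx1 : x < 1 := (div_lt_one (by positivity)).2 (mod_cast s.lt_succ_self)
  have hmain : ((N.sqrt + 1)! * N.sqrt ! : ℚ) * twoColorCount N N * x ^ N ≤
      (30 * N - 31 * (N.sqrt + 1).choose 2 - N.sqrt : ℕ) ^ N.sqrt * x ^ N := by
    rw [mul_assoc]
    exact (mul_le_mul_of_nonneg_left (twoColorCount_mul_pow_le hx0.le hx1 N N)
      (by positivity)).trans (factorial_mul_prod_le _ hk N N.lt_succ_sqrt' N.sqrt_le' hN)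
  exact_mod_cast le_of_mul_le_mul_right hmain (pow_pos hx0 N)

theorem factorial_mul_twoColorCount_le_of_le_sqrt {N : ℕ} (hk : 13 ≤ N.sqrt) :
    (N.sqrt + 1)! * N.sqrt ! * twoColorCount N N ≤
      (30 * N - 31 * (N.sqrt + 1).choose 2 - N.sqrt) ^ N.sqrt := by
  have hbase : 13 * N.sqrt ^ 2 ≤ 30 * N - 31 * (N.sqrt + 1).choose 2 - N.sqrt := by
    have := two_mul_choose_succ_two N.sqrt
    have : 13 * N.sqrt ^ 2 + 31 * (N.sqrt + 1).choose 2 + N.sqrt ≤ 30 * N := by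
      nlinarith [N.sqrt_le']
    omega
  calc (N.sqrt + 1)! * N.sqrt ! * twoColorCount N N
      ≤ (N.sqrt + 1)! * N.sqrt ! * 40 ^ (N.sqrt + 1) := by
        gcongr
        exact twoColorCount_le_forty_pow N N.lt_succ_sqrt'.le
    _ ≤ (13 * N.sqrt ^ 2) ^ N.sqrt := factorial_mul_factorial_mul_pow_le hk
    _ ≤ _ := by gcongr

theorem factorial_mul_twoColorCount_le {N : ℕ} (hN : 4 ≤ N) :
    (N.sqrt + 1)! * N.sqrt ! * twoColorCount N N ≤
      (30 * N - 31 * (N.sqrt + 1).choose 2 - N.sqrt) ^ N.sqrt := by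
  rcases lt_or_ge N 11 with hN11 | hN11
  · exact factorial_mul_twoColorCount_le_of_lt N hN11 hN
  · rcases lt_or_ge N.sqrt 13 with hk | hk
    · exact factorial_mul_twoColorCount_le_of_sqrt_lt hN11 hk
    · exact factorial_mul_twoColorCount_le_of_le_sqrt hk

theorem twoColorCount_le_gapCount {d n : ℕ} (hd : 31 ≤ d) (hn : 4 * (d - 1) ≤ n) :
    twoColorCount (n / (d - 1)) (n / (d - 1)) ≤ gapCount d 1 n := by
  set N := n / (d - 1)
  set k := N.sqrt
  set C := (k + 1).choose 2
  have hN : 4 ≤ N := (Nat.le_div_iff_mul_le (by omega)).2 hn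
  have hk : 2 ≤ k := Nat.le_sqrt.2 hN
  have hkN : k ^ 2 ≤ N := N.sqrt_le'
  have hCN : C ≤ N := choose_sqrt_succ_two_le N
  have hNn : (d - 1) * N ≤ n := Nat.mul_div_le n (d - 1)
  have hroom : 30 * N + d * C ≤ n + 31 * C := by
    obtain ⟨e, rfl⟩ := Nat.exists_eq_add_of_le hd
    have : (30 + e) * N ≤ n := by rwa [show 31 + e - 1 = 30 + e by omega] at hNn
    have : e * C ≤ e * N := by gcongr
    linarith
  have hpos : 31 * C + k + 1 ≤ 30 * N := by
    have := two_mul_choose_succ_two k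
    nlinarith
  obtain ⟨M, hM⟩ : ∃ M, n = M + (k + 1) * 1 + d * C :=
    ⟨n - ((k + 1) * 1 + d * C), by omega⟩
  refine Nat.le_of_mul_le_mul_left ?_ (show 0 < (k + 1)! * k ! from by positivity)
  calc (k + 1)! * k ! * twoColorCount N N ≤ (30 * N - 31 * C - k) ^ k :=
        factorial_mul_twoColorCount_le hN
    _ ≤ (M + 1) ^ k := by gcongr; omega
    _ ≤ (k + 1)! * k ! * gapCount d 1 n := by
        rw [hM]
        exact add_one_pow_le_mul_gapCount one_pos d k M

theorem congMinusCount_le_congCount (d a n : ℕ) : congMinusCount d a n ≤ congCount d a n :=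
  Nat.card_le_card_of_injective (fun p => ⟨p.1, p.2.1⟩) fun _ _ h =>
    Subtype.ext (congrArg (·.1) h)

theorem stmt9_general (d n : ℕ) (hd : 31 ≤ d) (hn : 4 * (d - 1) ≤ n) :
    congCount (d - 3) 1 n ≤ gapCount d 1 n := by
  have h := congCount_le_twoColorCount (d := d - 3) n one_pos (by omega)
  rw [show d - 3 + 3 - 1 = d - 1 by omega] at h
  exact h.trans (twoColorCount_le_gapCount hd hn)

theorem stmt9 (d n r : ℕ) (hd : d = 31 ∨ 63 ≤ d) (hr : 1 ≤ r)
    (hr2 : 2 ^ r - 1 ≤ d) (hrmax : ∀ s, 1 ≤ s → 2 ^ s - 1 ≤ d → s ≤ r)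
    (hn : 4 * d + 2 ^ r ≤ n) :
    congMinusCount (d - 3) 1 n ≤ gapCount d 1 n :=
  (congMinusCount_le_congCount _ _ _).trans <|
    stmt9_general d n (by omega) (by have := le_of_add_le_left hn; omega)
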